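/- arXiv:2001.09825 — 3 statements merged into one kernel-verified Lean document; each statement's English description precedes it below -/
import Mathlib

section
/- Let n ≥ 3 be odd and g ≥ 1. Then the free rank of the ℤ-module (H^{⊗n})_{D_{2n}} (i.e. the dimension over ℚ of (H^{⊗n})_{D_{2n}} ⊗ ℚ) equals (1/2)·N_{2g}(n) − (1/2)·(2g)^{(n+1)/2}. -/
open TensorProduct

/-- Words of length `n` in the alphabet `Fin (2*g)`, i.e. index sets of basis tensors
of the `n`-fold tensor power of the free `ℤ`-module `H` on `2g` generators. -/
abbrev DWord (g n : ℕ) : Type := ZMod n → Fin (2 * g)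

/-- The action of the generator `x` of the dihedral group `D_{2n}` on `H^{⊗n}`:
`x·(a_1⊗⋯⊗a_n) = a_n⊗a_1⊗⋯⊗a_{n-1}` (cyclic rotation of basis tensors). -/
noncomputable def rotMap (g n : ℕ) : Module.End ℤ ((DWord g n) →₀ ℤ) :=
  Finsupp.lmapDomain ℤ ℤ (fun w : DWord g n => fun i => w (i - 1))

/-- The action of the generator `y` of the dihedral group `D_{2n}` on `H^{⊗n}`:
`y·(a_1⊗⋯⊗a_n) = (-1)^n · (a_n⊗⋯⊗a_1)` (reversal with sign). -/
noncomputable def revMap (g n : ℕ) : Module.End ℤ ((DWord g n) →₀ ℤ) :=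
  ((-1 : ℤ) ^ n) • Finsupp.lmapDomain ℤ ℤ (fun w : DWord g n => fun i => w (-i - 1))

/-- The submodule generated by all `v - σ·v` where `σ` ranges over the elements
`x^k` and `x^k y` of the dihedral group `D_{2n}`. -/
noncomputable def dihedralAug (g n : ℕ) : Submodule ℤ ((DWord g n) →₀ ℤ) :=
  Submodule.span ℤ {u | ∃ (k : ℕ) (v : (DWord g n) →₀ ℤ),
    u = v - (rotMap g n ^ k) v ∨ u = v - ((rotMap g n ^ k) * revMap g n) v}

/-- The coinvariants `(H^{⊗n})_{D_{2n}}`. -/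
abbrev DCoinv (g n : ℕ) := ((DWord g n) →₀ ℤ) ⧸ dihedralAug g n

/-!
For a finite group `G` acting on a free module `M`, the norm `∑ g, ρ g` factors through the
coinvariants, and the composite of the two factors in the other order is multiplication by `|G|`.
Since `tr (AB) = tr (BA)`, after tensoring with a field `K` this gives
`|G| * dim (K ⊗ M_G) = ∑ g, tr (ρ g)`.

Here `M` is the free module on words and `ρ` permutes words up to sign, so `tr (ρ g)` is the sign
of `g` times the number of words fixed by `g`. A word is fixed by `g` iff it is constant on the
orbits of `g` on positions: a rotation of order `d` has `n / d` orbits, and for odd `n` a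
reflection, having exactly one fixed position, has `(n + 1) / 2`. There are `φ d` rotations of
order `d`.
-/

section Representation

open Representation

variable {R G M : Type*} [CommRing R] [Group G] [Fintype G] [AddCommGroup M] [Module R M]

/-- The map from the coinvariants of `ρ` back to `M` induced by the norm `∑ g, ρ g`; it is a section
of the projection up to the factor `|G|`. -/
noncomputable def coinvariantsNorm (ρ : Representation R G M) : ρ.Coinvariants →ₗ[R] M :=
  Coinvariants.lift ρ ρ.norm ρ.norm_comp_self

theorem coinvariantsNorm_comp_mk (ρ : Representation R G M) :
    coinvariantsNorm ρ ∘ₗ Coinvariants.mk ρ = ∑ g, ρ g :=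
  rfl

theorem mk_comp_coinvariantsNorm (ρ : Representation R G M) :
    Coinvariants.mk ρ ∘ₗ coinvariantsNorm ρ = (Fintype.card G : R) • LinearMap.id := by
  ext x
  simp [coinvariantsNorm, Representation.norm, LinearMap.sum_apply, Nat.cast_smul_eq_nsmul]

theorem card_mul_finrank_tensor_coinvariants (K : Type*) [Field K] [Algebra R K]
    [Module.Free R M] [Module.Finite R M] (ρ : Representation R G M) :
    (Fintype.card G * Module.finrank K (K ⊗[R] ρ.Coinvariants) : K) =
      ∑ g, algebraMap R K (LinearMap.trace R M (ρ g)) := by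
  let mk := (Coinvariants.mk ρ).baseChange K
  let norm := (coinvariantsNorm ρ).baseChange K
  calc (Fintype.card G * Module.finrank K (K ⊗[R] ρ.Coinvariants) : K)
      = LinearMap.trace K _ (mk ∘ₗ norm) := by
        rw [← LinearMap.baseChange_comp, mk_comp_coinvariantsNorm, LinearMap.baseChange_smul,
          LinearMap.baseChange_id, Nat.cast_smul_eq_nsmul, map_nsmul, LinearMap.trace_id,
          nsmul_eq_mul]
    _ = LinearMap.trace K _ (norm ∘ₗ mk) := LinearMap.trace_comp_comm' _ _
    _ = ∑ g, algebraMap R K (LinearMap.trace R M (ρ g)) := by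
        rw [← LinearMap.baseChange_comp, coinvariantsNorm_comp_mk, LinearMap.trace_baseChange,
          map_sum, map_sum]

end Representation

section Monomial

variable {R G : Type*} [CommSemiring R] [Monoid G]

/-- The permutation representation on the free module `X →₀ R`, twisted by a character `χ`:
`g` sends the basis vector `x` to `χ g` times the basis vector `g • x`. -/
noncomputable def monomialRep (χ : G →* R) (X : Type*) [MulAction G X] :
    Representation R G (X →₀ R) where
  toFun g := χ g • Finsupp.lmapDomain R R (g • ·)
  map_one' := by ext; simp
  map_mul' g h := by ext x; simp [mul_smul, mul_comm]

theorem monomialRep_apply (χ : G →* R) {X : Type*} [MulAction G X] (g : G) :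
    monomialRep χ X g = χ g • Finsupp.lmapDomain R R (g • ·) :=
  rfl

theorem trace_monomialRep (χ : G →* R) {X : Type*} [MulAction G X] [Finite X] (g : G) :
    LinearMap.trace R (X →₀ R) (monomialRep χ X g) = χ g * Nat.card (MulAction.fixedBy X g) := by
  classical
  have := Fintype.ofFinite X
  rw [monomialRep_apply, map_smul, smul_eq_mul,
    LinearMap.trace_eq_matrix_trace R Finsupp.basisSingleOne, Nat.card_eq_fintype_card,
    Fintype.card_ofFinset]
  simp [Matrix.trace, LinearMap.toMatrix_apply, Finsupp.single_apply]

end Monomial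

section OrbitCounting

open MulAction Subgroup

variable {G A : Type*} [Group G] [MulAction G A]

attribute [local instance] arrowAction

theorem mem_fixedBy_arrow_iff_orbitRel_le_ker {B : Type*} {g : G} {w : A → B} :
    w ∈ fixedBy (A → B) g ↔ orbitRel (zpowers g) A ≤ Setoid.ker w := by
  have mem_iff : w ∈ fixedBy (A → B) g ↔ zpowers g ≤ stabilizer G w := by
    rw [zpowers_le, mem_stabilizer_iff, mem_fixedBy]
  rw [mem_iff]
  constructor
  · rintro fixed a b ⟨h, rfl⟩
    have smul_eq : w ((h⁻¹ : G)⁻¹ • b) = w b := congrFun (fixed (inv_mem h.2)) b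
    rwa [inv_inv] at smul_eq
  · intro const h hh
    exact funext fun a => const ⟨⟨h⁻¹, inv_mem hh⟩, rfl⟩

theorem card_fixedBy_arrow [Finite A] (B : Type*) (g : G) :
    Nat.card (fixedBy (A → B) g) = Nat.card B ^ Nat.card (orbitRel.Quotient (zpowers g) A) := by
  rw [← Nat.card_fun]
  exact Nat.card_congr <|
    (Equiv.subtypeEquivRight fun _ => mem_fixedBy_arrow_iff_orbitRel_le_ker).trans
      (Setoid.liftEquiv _)

theorem card_orbits_zpowers_mul_orderOf {g : G}
    (free : ∀ h ∈ zpowers g, ∀ a : A, h • a = a → h = 1) :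
    Nat.card (orbitRel.Quotient (zpowers g) A) * orderOf g = Nat.card A := by
  have stabilizer_eq_bot (a : A) : stabilizer (zpowers g) a = ⊥ :=
    (eq_bot_iff_forall _).2 fun h ha => Subtype.ext (free h h.2 a ha)
  rw [Nat.card_congr (selfEquivOrbitsQuotientProd stabilizer_eq_bot), Nat.card_prod,
    Nat.card_zpowers]

theorem card_orbits_zpowers_mul_two [Finite A] {g : G} (hg : orderOf g = 2) :
    Nat.card (orbitRel.Quotient (zpowers g) A) * 2 = Nat.card A + Nat.card (fixedBy A g) := by
  classical
  have := Fintype.ofFinite A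
  have finOrder : IsOfFinOrder g := orderOf_pos_iff.1 (by lia)
  have := Fintype.ofEquiv _ (finEquivZPowers finOrder)
  have burnside := sum_card_fixedBy_eq_card_orbits_mul_card_group (zpowers g) A
  simp only [← Nat.card_eq_fintype_card, Nat.card_zpowers, hg] at burnside
  calc Nat.card (orbitRel.Quotient (zpowers g) A) * 2
      = ∑ h : zpowers g, Nat.card (fixedBy A (h : G)) := burnside.symm
    _ = ∑ i : Fin (orderOf g), Nat.card (fixedBy A (g ^ (i : ℕ))) :=
        (Fintype.sum_equiv (finEquivZPowers finOrder) _ _ fun _ => rfl).symm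
    _ = ∑ i ∈ Finset.range 2, Nat.card (fixedBy A (g ^ i)) := by
        rw [Fin.sum_univ_eq_sum_range (fun i => Nat.card (fixedBy A (g ^ i))), hg]
    _ = Nat.card A + Nat.card (fixedBy A g) := by
        simp [Finset.sum_range_succ]

end OrbitCounting

theorem sum_addOrderOf_eq_sum_divisors {C S : Type*} [AddGroup C] [IsAddCyclic C] [Fintype C]
    [NonAssocSemiring S] (f : ℕ → S) :
    ∑ c : C, f (addOrderOf c) = ∑ d ∈ (Fintype.card C).divisors, d.totient * f d := by
  classical
  have maps_to (c : C) (_ : c ∈ Finset.univ) : addOrderOf c ∈ (Fintype.card C).divisors :=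
    Nat.mem_divisors.2 ⟨addOrderOf_dvd_card, Fintype.card_ne_zero⟩
  rw [← Finset.sum_fiberwise_of_maps_to' maps_to]
  refine Finset.sum_congr rfl fun d hd => ?_
  rw [Finset.sum_const, nsmul_eq_mul,
    IsAddCyclic.card_addOrderOf_eq_totient (Nat.dvd_of_mem_divisors hd)]

section Dihedral

open DihedralGroup (r sr)
open MulAction Subgroup

variable {n : ℕ}

/-- The dihedral group acting on the vertices of the `n`-gon, with `r i` the rotation `x ↦ x + i`
and `sr i` the reflection `x ↦ -(x + i)`. -/
instance dihedralMulActionZMod : MulAction (DihedralGroup n) (ZMod n) where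
  smul
    | r i, x => x + i
    | sr i, x => -(x + i)
  one_smul := add_zero
  mul_smul := by
    rintro (i | i) (j | j) x
    · change x + (i + j) = x + j + i; ring
    · change -(x + (j - i)) = -(x + j) + i; ring
    · change -(x + (i + j)) = -(x + j + i); ring
    · change x + (j - i) = -(-(x + j) + i); ring

theorem r_smul (i x : ZMod n) : r i • x = x + i :=
  rfl

theorem sr_smul (i x : ZMod n) : sr i • x = -(x + i) :=
  rfl

theorem orderOf_r_eq_addOrderOf [NeZero n] (i : ZMod n) : orderOf (r i) = addOrderOf i := by
  rw [DihedralGroup.orderOf_r, ← ZMod.addOrderOf_coe _ (NeZero.ne n), ZMod.natCast_zmod_val]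

theorem card_orbits_zpowers_r [NeZero n] (i : ZMod n) :
    Nat.card (orbitRel.Quotient (zpowers (r i)) (ZMod n)) = n / addOrderOf i := by
  have free : ∀ h ∈ zpowers (r i), ∀ x : ZMod n, h • x = x → h = 1 := by
    rintro _ ⟨k, rfl⟩ x hx
    simp_all [r_smul]
  have orbits := card_orbits_zpowers_mul_orderOf free
  rw [orderOf_r_eq_addOrderOf, Nat.card_zmod] at orbits
  exact Nat.eq_div_of_mul_eq_left (addOrderOf_pos i).ne' orbits

theorem card_fixedBy_sr (hodd : Odd n) (i : ZMod n) :
    Nat.card (fixedBy (ZMod n) (sr i)) = 1 := by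
  obtain ⟨two, htwo⟩ : IsUnit (2 : ZMod n) := by
    simpa using (ZMod.isUnit_iff_coprime 2 n).2 (Nat.coprime_two_left.2 hodd)
  have fixedBy_eq : fixedBy (ZMod n) (sr i) = {-(↑two⁻¹ * i)} := by
    ext x
    rw [mem_fixedBy, sr_smul, Set.mem_singleton_iff, ← mul_neg, two.eq_inv_mul_iff_mul_eq, htwo]
    grind
  rw [fixedBy_eq, Nat.card_unique]

theorem card_orbits_zpowers_sr (hodd : Odd n) (i : ZMod n) :
    Nat.card (orbitRel.Quotient (zpowers (sr i)) (ZMod n)) = (n + 1) / 2 := by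
  have : NeZero n := ⟨hodd.pos.ne'⟩
  have orbits := card_orbits_zpowers_mul_two (A := ZMod n) (DihedralGroup.orderOf_sr i)
  rw [card_fixedBy_sr hodd, Nat.card_zmod] at orbits
  lia

theorem sum_dihedralGroup [NeZero n] {S : Type*} [AddCommMonoid S] (f : DihedralGroup n → S) :
    ∑ σ, f σ = ∑ i, f (r i) + ∑ i, f (sr i) := by
  rw [← DihedralGroup.equivSum.symm.sum_comp, Fintype.sum_sum_type]
  rfl

/-- The determinant character of the dihedral group: `1` on rotations, `-1` on reflections. -/
def dihedralSign (n : ℕ) : DihedralGroup n →* ℤ where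
  toFun
    | r _ => 1
    | sr _ => -1
  map_one' := rfl
  map_mul' := by rintro (i | i) (j | j) <;> rfl

theorem dihedralSign_pow_r (k : ℕ) (i : ZMod n) : (dihedralSign n ^ k) (r i) = 1 :=
  one_pow k

theorem dihedralSign_pow_sr (k : ℕ) (i : ZMod n) : (dihedralSign n ^ k) (sr i) = (-1) ^ k :=
  rfl

attribute [local instance] arrowAction

theorem sum_dihedralSign_mul_card_fixedBy (hodd : Odd n) [NeZero n] (B : Type*) :
    ∑ σ, (dihedralSign n ^ n) σ * (Nat.card (fixedBy (ZMod n → B) σ) : ℤ) =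
      ∑ d ∈ n.divisors, (d.totient * Nat.card B ^ (n / d) : ℤ) -
        n * Nat.card B ^ ((n + 1) / 2) := by
  have sum_rotations := sum_addOrderOf_eq_sum_divisors (C := ZMod n)
    fun d => (Nat.card B ^ (n / d) : ℤ)
  rw [ZMod.card] at sum_rotations
  simp only [sum_dihedralGroup, dihedralSign_pow_r, dihedralSign_pow_sr, hodd.neg_one_pow,
    card_fixedBy_arrow, card_orbits_zpowers_r, card_orbits_zpowers_sr hodd, ← sum_rotations]
  simp [sub_eq_add_neg]

/-- The representation of the dihedral group on `H^{⊗n}`: the permutation representation on words,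
twisted by the character that is `1` on rotations and `(-1) ^ n` on reflections. The generators `x`
and `y` of `D_{2n}` are `r 1` and `sr 1`. -/
noncomputable abbrev wordRep (g n : ℕ) : Representation ℤ (DihedralGroup n) (DWord g n →₀ ℤ) :=
  monomialRep (dihedralSign n ^ n) (DWord g n)

theorem wordRep_r_one (g n : ℕ) : wordRep g n (r 1) = rotMap g n := by
  rw [monomialRep_apply, dihedralSign_pow_r, one_smul]
  simp only [rotMap, sub_eq_add_neg]
  rfl

theorem wordRep_sr_one (g n : ℕ) : wordRep g n (sr 1) = revMap g n := by
  have neg_sub_one (i : ZMod n) : -i - 1 = -(i + 1) := by ring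
  rw [monomialRep_apply, dihedralSign_pow_sr]
  simp only [revMap, neg_sub_one]
  rfl

theorem dihedralAug_eq_ker (g n : ℕ) [NeZero n] :
    dihedralAug g n = Representation.Coinvariants.ker (wordRep g n) := by
  have rot_pow (k : ℕ) : rotMap g n ^ k = wordRep g n (r k) := by
    rw [← wordRep_r_one, ← map_pow, DihedralGroup.r_one_pow]
  have rot_pow_mul_rev (k : ℕ) : rotMap g n ^ k * revMap g n = wordRep g n (sr (1 - k)) := by
    rw [rot_pow, ← wordRep_sr_one, ← map_mul, DihedralGroup.r_mul_sr]
  simp only [dihedralAug, rot_pow_mul_rev]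
  simp only [rot_pow]
  apply le_antisymm <;> apply Submodule.span_le.2
  · rintro _ ⟨k, v, rfl | rfl⟩ <;>
      exact sub_mem_comm_iff.1 (Representation.Coinvariants.sub_mem_ker _ v)
  · rintro _ ⟨⟨i | i, v⟩, rfl⟩ <;> refine sub_mem_comm_iff.1 (Submodule.subset_span ?_)
    · exact ⟨i.val, v, Or.inl (by rw [ZMod.natCast_zmod_val])⟩
    · exact ⟨(1 - i).val, v, Or.inr (by rw [ZMod.natCast_zmod_val, sub_sub_cancel])⟩

theorem two_mul_mul_finrank_tensor_dCoinv (g n : ℕ) [NeZero n] :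
    (2 * n * Module.finrank ℚ (ℚ ⊗[ℤ] DCoinv g n) : ℤ) =
      ∑ σ, (dihedralSign n ^ n) σ * (Nat.card (fixedBy (DWord g n) σ) : ℤ) := by
  have finrank_eq : Module.finrank ℚ (ℚ ⊗[ℤ] DCoinv g n) =
      Module.finrank ℚ (ℚ ⊗[ℤ] (wordRep g n).Coinvariants) :=
    ((Submodule.quotEquivOfEq _ _ (dihedralAug_eq_ker g n)).baseChange ℤ ℚ _ _).finrank_eq
  have card_mul_finrank : ((2 * n : ℕ) * Module.finrank ℚ (ℚ ⊗[ℤ] DCoinv g n) : ℚ) =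
      ∑ σ, algebraMap ℤ ℚ (LinearMap.trace ℤ _ (wordRep g n σ)) := by
    rw [finrank_eq, ← DihedralGroup.card]
    exact card_mul_finrank_tensor_coinvariants ℚ (wordRep g n)
  simp only [trace_monomialRep, eq_intCast] at card_mul_finrank
  exact_mod_cast card_mul_finrank

end Dihedral

/-- For `n ≥ 3` odd and `g ≥ 1`, the free rank of `(H^{⊗n})_{D_{2n}}`, i.e. the dimension
over `ℚ` of `(H^{⊗n})_{D_{2n}} ⊗ ℚ`, equals `(1/2)·N_{2g}(n) − (1/2)·(2g)^{(n+1)/2}`,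
where `N_q(n) = (1/n)·Σ_{d∣n} φ(d)·q^{n/d}`.  (The identity is stated multiplied
through by `2n` and with the subtraction moved to the left-hand side.) -/
theorem stmt_1 (g n : ℕ) (hg : 1 ≤ g) (hn : 3 ≤ n) (hodd : Odd n) :
    2 * n * Module.finrank ℚ (ℚ ⊗[ℤ] DCoinv g n) + n * (2 * g) ^ ((n + 1) / 2) =
      ∑ d ∈ n.divisors, d.totient * (2 * g) ^ (n / d) := by
  have : NeZero n := ⟨hodd.pos.ne'⟩
  have count := two_mul_mul_finrank_tensor_dCoinv g n
  rw [sum_dihedralSign_mul_card_fixedBy hodd, Nat.card_fin, eq_sub_iff_add_eq] at count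
  exact_mod_cast count
end

section
/- Let n ≥ 1 be odd and q ≥ 1. Then the number of symmetric necklaces of length n over an alphabet with q elements equals q^{(n+1)/2}. -/
/-- Two words `w, w'` of length `N` (functions `ZMod N → A`) are related iff `w'` is a
rotation of `w`, i.e. `w' = k·w` where `(k·w)(i) = w(i−k)`.  Necklaces are the orbits,
i.e. the elements of `Quot (rotRel N A)`. -/
def rotRel (N : ℕ) (A : Type*) : (ZMod N → A) → (ZMod N → A) → Prop :=
  fun w w' => ∃ k : ZMod N, ∀ i, w' i = w (i - k)

/-- A word `w` of length `N` is symmetric iff there is `k` with `w(−i) = w(k+i)` for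
all `i` (equivalently, its necklace is invariant under reversal). -/
def IsSymWord (N : ℕ) (A : Type*) (w : ZMod N → A) : Prop :=
  ∃ k : ZMod N, ∀ i, w (-i) = w (k + i)

/-!
In `ℤ/nℤ` with `n` odd, every element can be halved. If a word satisfies `w (-i) = w (k + i)`, then
rotating it by half of `k` makes it even, so every symmetric necklace contains an even word. That
word is unique: if an even word stays even after rotation by `k`, composing the two reflections
shows that `2k` is a period, hence so is `k`, which is a multiple of `2k`. So symmetric necklaces
correspond to even words, and an even word is determined freely by its values at `0, …, ⌊n/2⌋`.
-/

section EvenFunctions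

variable {G A : Type*} [AddCommGroup G]

theorem periodic_two_nsmul_of_even_of_even_comp_sub {w : G → A} {k : G} (hw : Function.Even w)
    (hwk : Function.Even fun i => w (i - k)) : Function.Periodic w (2 • k) := fun i =>
  calc w (i + 2 • k) = w (-(i + k) - k) := by rw [← hw]; congr 1; abel
    _ = w (i + k - k) := hwk (i + k)
    _ = w i := by rw [add_sub_cancel_right]

theorem even_comp_add_of_forall_neg_eq_two_nsmul_add {w : G → A} {h : G}
    (hw : ∀ i, w (-i) = w (2 • h + i)) : Function.Even fun i => w (i + h) := fun i =>
  calc w (-i + h) = w (-(i - h)) := by rw [neg_sub, sub_eq_neg_add]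
    _ = w (2 • h + (i - h)) := hw (i - h)
    _ = w (i + h) := by congr 1; abel

end EvenFunctions

section EvenWords

variable {n : ℕ} {A : Type*}

theorem natCast_natAbs_valMinAbs_eq_or_eq_neg (i : ZMod n) :
    (i.valMinAbs.natAbs : ZMod n) = i ∨ (i.valMinAbs.natAbs : ZMod n) = -i := by
  rcases Int.natAbs_eq i.valMinAbs with hi | hi
  · left
    conv_rhs => rw [← i.coe_valMinAbs, hi, Int.cast_natCast]
  · right
    conv_rhs => rw [← i.coe_valMinAbs, hi, Int.cast_neg, Int.cast_natCast, neg_neg]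

variable (n A) in
/-- Even words of length `n` as freely chosen sequences of their values at `0, …, ⌊n/2⌋`: the value
at `i` is the one at the absolute value of the representative of `i` closest to `0`. -/
def evenWordEquiv [NeZero n] :
    {w : ZMod n → A // Function.Even w} ≃ (Fin (n / 2 + 1) → A) where
  toFun w j := w.1 (j : ℕ)
  invFun u :=
    { val := fun i => u ⟨i.valMinAbs.natAbs, Nat.lt_succ_of_le i.natAbs_valMinAbs_le⟩
      property := fun i => by simp only [ZMod.natAbs_valMinAbs_neg] }
  left_inv := by
    rintro ⟨w, hw⟩
    ext i
    rcases natCast_natAbs_valMinAbs_eq_or_eq_neg i with hi | hi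
    · exact congrArg w hi
    · exact (congrArg w hi).trans (hw i)
  right_inv u := by
    ext j
    refine congrArg u (Fin.ext ?_)
    simp only [ZMod.valMinAbs_natCast_of_le_half (Nat.le_of_lt_succ j.is_lt), Int.natAbs_natCast]

end EvenWords

section Necklaces

variable {n : ℕ} {A : Type*}

theorem rotRel_equivalence (n : ℕ) (A : Type*) : Equivalence (rotRel n A) where
  refl w := ⟨0, fun i => by rw [sub_zero]⟩
  symm := fun ⟨k, hk⟩ => ⟨-k, fun i => by rw [hk, sub_neg_eq_add, add_sub_cancel_right]⟩
  trans := fun ⟨k, hk⟩ ⟨l, hl⟩ => ⟨l + k, fun i => by rw [hl, hk, sub_sub]⟩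

theorem quot_mk_rotRel_eq_iff {v w : ZMod n → A} :
    Quot.mk (rotRel n A) v = Quot.mk (rotRel n A) w ↔ rotRel n A v w :=
  Quot.eq.trans (rotRel_equivalence n A).eqvGen_iff

theorem isSymWord_of_even {w : ZMod n → A} (hw : Function.Even w) : IsSymWord n A w :=
  ⟨0, fun i => by rw [hw, zero_add]⟩

theorem exists_nsmul_two_nsmul_eq_self (hn : Odd n) (k : ZMod n) : ∃ m : ℕ, m • 2 • k = k := by
  have order_dvd : addOrderOf k ∣ n := by
    simpa only [Nat.card_zmod] using addOrderOf_dvd_natCard k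
  exact exists_nsmul_eq_self_of_coprime (hn.of_dvd_nat order_dvd).coprime_two_left

theorem eq_of_rotRel_of_even (hn : Odd n) {v w : ZMod n → A} (hv : Function.Even v)
    (hw : Function.Even w) (hvw : rotRel n A v w) : v = w := by
  obtain ⟨k, hk⟩ := hvw
  obtain rfl : w = fun i => v (i - k) := funext hk
  obtain ⟨m, hm⟩ := exists_nsmul_two_nsmul_eq_self hn k
  have periodic_k : Function.Periodic v k :=
    hm ▸ (periodic_two_nsmul_of_even_of_even_comp_sub hv hw).nsmul m
  exact funext fun i => (periodic_k.sub_eq i).symm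

theorem exists_even_rotRel_of_isSymWord (hn : Odd n) {w : ZMod n → A} (hw : IsSymWord n A w) :
    ∃ v, Function.Even v ∧ rotRel n A v w := by
  obtain ⟨k, hk⟩ := hw
  obtain ⟨m, hm⟩ := exists_nsmul_two_nsmul_eq_self hn k
  rw [nsmul_left_comm] at hm
  exact ⟨fun i => w (i + m • k), even_comp_add_of_forall_neg_eq_two_nsmul_add (hm.symm ▸ hk),
    m • k, fun i => congrArg w (sub_add_cancel i _).symm⟩

variable (n A) in
/-- The symmetric necklaces of length `n` over `A`: the rotation classes that contain a symmetric
word. -/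
abbrev SymNecklace : Type _ :=
  {c : Quot (rotRel n A) // ∃ w : ZMod n → A, IsSymWord n A w ∧ Quot.mk (rotRel n A) w = c}

/-- The necklace of an even word, as a symmetric necklace. For odd `n` this picks out a canonical
representative of each symmetric necklace. -/
def symNecklaceOfEven (w : {w : ZMod n → A // Function.Even w}) : SymNecklace n A :=
  ⟨Quot.mk _ w.1, w.1, isSymWord_of_even w.2, rfl⟩

theorem symNecklaceOfEven_bijective (hn : Odd n) :
    Function.Bijective (symNecklaceOfEven (n := n) (A := A)) := by
  constructor
  · rintro ⟨v, hv⟩ ⟨w, hw⟩ hvw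
    have hrot : rotRel n A v w := quot_mk_rotRel_eq_iff.mp (congrArg Subtype.val hvw)
    exact Subtype.ext (eq_of_rotRel_of_even hn hv hw hrot)
  · rintro ⟨_, w, hw, rfl⟩
    obtain ⟨v, hv, hvw⟩ := exists_even_rotRel_of_isSymWord hn hw
    exact ⟨⟨v, hv⟩, Subtype.ext (Quot.sound hvw)⟩

end Necklaces

/-- For `n ≥ 1` odd and an alphabet `A` with `q ≥ 1` elements, the number of symmetric
necklaces of length `n` over `A` equals `q^{(n+1)/2}`. -/
theorem stmt_6 (n q : ℕ) (hodd : Odd n) (A : Type*) [Fintype A]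
    (hq : 1 ≤ q) (hA : Nat.card A = q) :
    Nat.card {c : Quot (rotRel n A) //
      ∃ w : ZMod n → A, IsSymWord n A w ∧ Quot.mk (rotRel n A) w = c} =
      q ^ ((n + 1) / 2) := by
  have : NeZero n := ⟨hodd.pos.ne'⟩
  have half_eq : n / 2 + 1 = (n + 1) / 2 := by grind
  calc Nat.card (SymNecklace n A)
      = Nat.card {w : ZMod n → A // Function.Even w} :=
        (Nat.card_eq_of_bijective _ (symNecklaceOfEven_bijective hodd)).symm
    _ = Nat.card (Fin (n / 2 + 1) → A) := Nat.card_congr (evenWordEquiv n A)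
    _ = q ^ ((n + 1) / 2) := by rw [Nat.card_fun, Nat.card_fin, hA, half_eq]
end

section
/- For every n ≥ 2 and g ≥ 1 there are isomorphisms of abelian groups (H^{⊗n})_{D_{2n}} ⊗ M ≅ P_{2n} ⊗ M and S_n ≅ P^s_{2n} ⊗ M, where M = ℤ if n is even and M = ℤ/2ℤ if n is odd, both induced by the doubling assignment on basis tensors b_1⊗⋯⊗b_n ↦ b_1⊗⋯⊗b_n⊗b_1⊗⋯⊗b_n. -/
open TensorProduct

/-- The doubling of a basis word: `b_1⋯b_n ↦ b_1⋯b_n b_1⋯b_n` (i.e. `i ↦ w (i mod n)`),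
indexing the basis tensor `b_1⊗⋯⊗b_n⊗b_1⊗⋯⊗b_n`. -/
def dblWord (g n : ℕ) (w : DWord g n) : DWord g (2 * n) :=
  fun i => w (ZMod.castHom (dvd_mul_left n 2) (ZMod n) i)

/-- A basis word (tensor) `a_1⊗⋯⊗a_m` is symmetric if there is `k` with
`a_{m−i} = a_{k+i}` for all `i` (indices mod `m`); 0-indexed this reads
`∃ k, ∀ i, w(−i) = w(k+i)` up to shifting `k`. -/
def IsSymTensor (g m : ℕ) (w : DWord g m) : Prop :=
  ∃ k : ZMod m, ∀ i, w (-i) = w (k + i)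

/-- `S_n`: the submodule of `(H^{⊗n})_{D_{2n}}` generated by the classes of the
symmetric basis tensors. -/
noncomputable def Ssub (g n : ℕ) : Submodule ℤ (DCoinv g n) :=
  Submodule.span ℤ {c | ∃ w : DWord g n, IsSymTensor g n w ∧
    c = Submodule.Quotient.mk (Finsupp.single w 1)}

/-- `P_{2n}`: the submodule of `(H^{⊗2n})_{D_{4n}}` generated by the classes of the
periodic basis tensors `b_1⊗⋯⊗b_n⊗b_1⊗⋯⊗b_n`. -/
noncomputable def Psub (g n : ℕ) : Submodule ℤ (DCoinv g (2 * n)) :=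
  Submodule.span ℤ (Set.range fun w : DWord g n =>
    (Submodule.Quotient.mk (Finsupp.single (dblWord g n w) 1) : DCoinv g (2 * n)))

/-- `P^s_{2n}`: the submodule of `(H^{⊗2n})_{D_{4n}}` generated by the classes of the
periodic basis tensors that are in addition symmetric. -/
noncomputable def PsSub (g n : ℕ) : Submodule ℤ (DCoinv g (2 * n)) :=
  Submodule.span ℤ {c | ∃ w : DWord g n, IsSymTensor g (2 * n) (dblWord g n w) ∧
    c = Submodule.Quotient.mk (Finsupp.single (dblWord g n w) 1)}

/-!
Let `f` be a function on words of length `n` that is invariant under rotation and reversal.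
Extended by zero outside the doubled words it is an invariant function on words of length `2n`,
where the reversal carries no sign; hence it factors through `(H^{⊗2n})_{D_{4n}}`. When `(-1)^n`
acts trivially on `M`, applying this to `w ↦ [w] ⊗ m` gives a left inverse of the doubling map
tensored with `M`. The classes of an invariant set of words span a direct summand of the
coinvariants, so doubling is an isomorphism between such spans, also after tensoring. Finally, a
symmetric word is a rotation of its reversal, whose class is the opposite one when `n` is odd; so
`S_n` is then killed by `2` and `S_n ≅ S_n ⊗ ℤ/2`.
-/

section Semiconj

variable {X Y A : Type*} [Zero A] {f : X → Y} {σ : Equiv.Perm X} {τ : Equiv.Perm Y}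

lemma preimage_image_of_semiconj (h : Function.Semiconj f σ τ) {T : Set X} (hT : σ ⁻¹' T = T) :
    τ ⁻¹' (f '' T) = f '' T := by
  have hσT : σ '' T = T := by
    conv_lhs => rw [← hT, Set.image_preimage_eq T σ.surjective]
  calc τ ⁻¹' (f '' T) = τ ⁻¹' (τ '' (f '' T)) := by rw [← h.set_image.eq, hσT]
    _ = f '' T := τ.injective.preimage_image _

lemma extend_zero_apply_of_semiconj (hf : Function.Injective f) (h : Function.Semiconj f σ τ)
    {u : X → A} (hu : ∀ x, u (σ x) = u x) (y : Y) :
    Function.extend f u 0 (τ y) = Function.extend f u 0 y := by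
  by_cases hy : y ∈ Set.range f
  · obtain ⟨x, rfl⟩ := hy
    rw [← h.eq, hf.extend_apply, hf.extend_apply, hu]
  · have hτy : τ y ∉ Set.range f := by
      rwa [← Set.image_univ, ← Set.mem_preimage, preimage_image_of_semiconj h Set.preimage_univ,
        Set.image_univ]
    rw [Function.extend_apply' _ _ _ hy, Function.extend_apply' _ _ _ hτy]
    rfl

end Semiconj

section Torsion

variable {A : Type*} [AddCommGroup A]

lemma neg_one_pow_smul_of_two_nsmul_eq_zero (h : ∀ a : A, 2 • a = 0) (n : ℕ) (a : A) :
    (-1 : ℤ) ^ n • a = a := by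
  rcases neg_one_pow_eq_or ℤ n with hn | hn
  · rw [hn, one_smul]
  · rw [hn, neg_one_smul, neg_eq_iff_add_eq_zero, ← two_nsmul, h]

lemma exists_linearEquiv_tensor_zmod {k : ℕ} (h : ∀ a : A, k • a = 0) :
    ∃ e : A ≃ₗ[ℤ] A ⊗[ℤ] ZMod k, ∀ a, e a = a ⊗ₜ 1 := by
  let : Module (ZMod k) A := AddCommGroup.zmodModule h
  let tmulOne : A →+ A ⊗[ℤ] ZMod k := ((TensorProduct.mk ℤ A (ZMod k)).flip 1).toAddMonoidHom
  let act : A ⊗[ℤ] ZMod k →+ A :=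
    TensorProduct.liftAddHom (smulAddHom (ZMod k) A).flip fun z a c => by
      rw [AddMonoidHom.flip_apply, AddMonoidHom.flip_apply, map_zsmul, map_zsmul,
        AddMonoidHom.smul_apply]
  have tmulOne_act : tmulOne.comp act = AddMonoidHom.id _ := by
    refine AddMonoidHom.toIntLinearMap_injective (TensorProduct.ext' fun a c => ?_)
    obtain ⟨z, rfl⟩ := ZMod.intCast_surjective c
    change ((z : ZMod k) • a) ⊗ₜ[ℤ] (1 : ZMod k) = a ⊗ₜ (z : ZMod k)
    rw [Int.cast_smul_eq_zsmul, TensorProduct.smul_tmul, zsmul_one]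
  have act_tmulOne : act.comp tmulOne = AddMonoidHom.id A :=
    AddMonoidHom.ext fun a => one_smul (ZMod k) a
  exact ⟨(tmulOne.toAddEquiv act act_tmulOne tmulOne_act).toIntLinearEquiv, fun _ => rfl⟩

end Torsion

namespace DWord

variable {g n : ℕ}

/-- Cyclic rotation of words, the action of `x` on the indices of basis tensors. -/
def rot : Equiv.Perm (DWord g n) where
  toFun w i := w (i - 1)
  invFun w i := w (i + 1)
  left_inv w := by simp
  right_inv w := by simp

/-- Reversal of words, the action of `y` on the indices of basis tensors without its sign. -/
def rev : Equiv.Perm (DWord g n) :=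
  Function.Involutive.toPerm (fun w i => w (-i - 1)) fun w => by simp

lemma rot_apply (w : DWord g n) (i : ZMod n) : rot w i = w (i - 1) := rfl

lemma rev_apply (w : DWord g n) (i : ZMod n) : rev w i = w (-i - 1) := rfl

lemma dblWord_injective (g n : ℕ) : Function.Injective (dblWord g n) :=
  (ZMod.castHom_surjective (dvd_mul_left n 2)).injective_comp_right

lemma semiconj_dblWord_rot (g n : ℕ) : Function.Semiconj (dblWord g n) rot rot := fun w => by
  funext i
  simp only [rot_apply, dblWord, map_sub, map_one]

lemma semiconj_dblWord_rev (g n : ℕ) : Function.Semiconj (dblWord g n) rev rev := fun w => by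
  funext i
  simp only [rev_apply, dblWord, map_sub, map_neg, map_one]

lemma isSymTensor_rot_iff (w : DWord g n) : IsSymTensor g n (rot w) ↔ IsSymTensor g n w := by
  constructor
  · rintro ⟨k, hk⟩
    refine ⟨k - 2, fun i => ?_⟩
    convert hk (i - 1) using 1 <;> rw [rot_apply] <;> ring_nf
  · rintro ⟨k, hk⟩
    refine ⟨k + 2, fun i => ?_⟩
    convert hk (i + 1) using 1 <;> rw [rot_apply] <;> ring_nf

lemma isSymTensor_rev {w : DWord g n} (hw : IsSymTensor g n w) : IsSymTensor g n (rev w) := by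
  obtain ⟨k, hk⟩ := hw
  refine ⟨-k - 2, fun i => ?_⟩
  convert hk (1 - i) using 1 <;> rw [rev_apply] <;> ring_nf

lemma isSymTensor_rev_iff (w : DWord g n) : IsSymTensor g n (rev w) ↔ IsSymTensor g n w :=
  ⟨fun hw => rev.symm_apply_apply w ▸ isSymTensor_rev hw, isSymTensor_rev⟩

lemma isSymTensor_dblWord_iff (w : DWord g n) :
    IsSymTensor g (2 * n) (dblWord g n w) ↔ IsSymTensor g n w := by
  have hsurj := ZMod.castHom_surjective (dvd_mul_left n 2)
  simp only [IsSymTensor, hsurj.exists, hsurj.forall, dblWord, map_neg, map_add]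

/-- A set of words stable under the dihedral group. -/
structure IsDihedralInvariant (T : Set (DWord g n)) : Prop where
  preimage_rot : rot ⁻¹' T = T
  preimage_rev : rev ⁻¹' T = T

lemma IsDihedralInvariant.univ : IsDihedralInvariant (Set.univ : Set (DWord g n)) :=
  ⟨rfl, rfl⟩

lemma IsDihedralInvariant.setOf_isSymTensor : IsDihedralInvariant {w | IsSymTensor g n w} :=
  ⟨Set.ext isSymTensor_rot_iff, Set.ext isSymTensor_rev_iff⟩

lemma IsDihedralInvariant.image_dblWord {T : Set (DWord g n)} (hT : IsDihedralInvariant T) :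
    IsDihedralInvariant (dblWord g n '' T) :=
  ⟨preimage_image_of_semiconj (semiconj_dblWord_rot g n) hT.preimage_rot,
    preimage_image_of_semiconj (semiconj_dblWord_rev g n) hT.preimage_rev⟩

end DWord

namespace DCoinv

open DWord

variable {g n : ℕ}

/-- The class of a basis tensor in the coinvariants. -/
noncomputable def ofWord (w : DWord g n) : DCoinv g n :=
  Submodule.Quotient.mk (Finsupp.single w 1)

lemma rotMap_single (w : DWord g n) :
    rotMap g n (Finsupp.single w 1) = Finsupp.single (rot w) 1 :=
  Finsupp.mapDomain_single

lemma revMap_single (w : DWord g n) :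
    revMap g n (Finsupp.single w 1) = (-1 : ℤ) ^ n • Finsupp.single (rev w) (1 : ℤ) := by
  rw [revMap, LinearMap.smul_apply, Finsupp.lmapDomain_apply, Finsupp.mapDomain_single]
  rfl

lemma ofWord_rot (w : DWord g n) : ofWord (rot w) = ofWord w := by
  refine Eq.symm <| (Submodule.Quotient.eq _).2 <|
    Submodule.subset_span ⟨1, Finsupp.single w 1, Or.inl ?_⟩
  rw [pow_one, rotMap_single]

lemma ofWord_rev (w : DWord g n) : (-1 : ℤ) ^ n • ofWord (rev w) = ofWord w := by
  refine Eq.symm <| (Submodule.Quotient.eq _).2 <|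
    Submodule.subset_span ⟨0, Finsupp.single w 1, Or.inr ?_⟩
  rw [pow_zero, one_mul, revMap_single]

lemma ofWord_rev_of_even (hn : Even n) (w : DWord g n) : ofWord (rev w) = ofWord w := by
  simpa only [hn.neg_one_pow, one_smul] using ofWord_rev w

section Lift

variable {A : Type*} [AddCommGroup A]

lemma dihedralAug_le_ker {L : (DWord g n →₀ ℤ) →ₗ[ℤ] A} (hrot : L ∘ₗ rotMap g n = L)
    (hrev : L ∘ₗ revMap g n = L) : dihedralAug g n ≤ LinearMap.ker L := by
  have hpow (k : ℕ) (v) : L ((rotMap g n ^ k) v) = L v := by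
    induction k with
    | zero => simp
    | succ k ih => rw [pow_succ', Module.End.mul_apply, ← LinearMap.comp_apply, hrot, ih]
  refine Submodule.span_le.2 ?_
  rintro _ ⟨k, v, rfl | rfl⟩ <;> refine LinearMap.sub_mem_ker_iff.2 ?_
  · exact (hpow k v).symm
  · rw [Module.End.mul_apply, hpow, ← LinearMap.comp_apply, hrev]

/-- The universal property of the coinvariants, in terms of functions on words. -/
noncomputable def lift (f : DWord g n → A) (hrot : ∀ w, f (rot w) = f w)
    (hrev : ∀ w, (-1 : ℤ) ^ n • f (rev w) = f w) : DCoinv g n →ₗ[ℤ] A :=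
  (dihedralAug g n).liftQ (Finsupp.linearCombination ℤ f) <| dihedralAug_le_ker
    (Finsupp.lhom_ext' fun w => LinearMap.ext_ring <| by simp [rotMap_single, hrot])
    (Finsupp.lhom_ext' fun w => LinearMap.ext_ring <| by simp [revMap_single, hrev])

lemma lift_ofWord (f : DWord g n → A) (hrot : ∀ w, f (rot w) = f w)
    (hrev : ∀ w, (-1 : ℤ) ^ n • f (rev w) = f w) (w : DWord g n) :
    lift f hrot hrev (ofWord w) = f w := by
  simp [lift, ofWord]

end Lift

section ClassSpan

variable {T : Set (DWord g n)}

/-- The submodule of the coinvariants generated by the classes of the words in `T`; the modules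
`S_n`, `P_{2n}` and `P^s_{2n}` are all of this form. -/
noncomputable def classSpan (T : Set (DWord g n)) : Submodule ℤ (DCoinv g n) :=
  Submodule.span ℤ {c | ∃ w, w ∈ T ∧ c = ofWord w}

lemma classSpan_eq_span_image (T : Set (DWord g n)) :
    classSpan T = Submodule.span ℤ (ofWord '' T) := by
  simp only [classSpan, Set.image, eq_comm]

lemma ofWord_mem_classSpan {w : DWord g n} (hw : w ∈ T) : ofWord w ∈ classSpan T :=
  Submodule.subset_span ⟨w, hw, rfl⟩

lemma classSpan_univ (g n : ℕ) : classSpan (Set.univ : Set (DWord g n)) = ⊤ := by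
  have hsingle := (Finsupp.basisSingleOne (R := ℤ) (ι := DWord g n)).span_eq
  rw [classSpan_eq_span_image, Set.image_univ,
    ← LinearMap.range_eq_top.2 (dihedralAug g n).mkQ_surjective, LinearMap.range_eq_map,
    ← hsingle, Submodule.map_span, ← Set.range_comp, Finsupp.coe_basisSingleOne]
  rfl

lemma psub_eq_classSpan (g n : ℕ) : Psub g n = classSpan (dblWord g n '' Set.univ) := by
  rw [classSpan_eq_span_image, Set.image_image, Set.image_univ]
  rfl

lemma psSub_eq_classSpan (g n : ℕ) :
    PsSub g n = classSpan (dblWord g n '' {w | IsSymTensor g n w}) := by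
  rw [classSpan_eq_span_image, Set.image_image]
  simp only [PsSub, isSymTensor_dblWord_iff, Set.image, Set.mem_ofPred_eq, ofWord,
    @eq_comm (DCoinv g (2 * n))]

lemma classSpan_tensor_ext {M A : Type*} [AddCommGroup M] [AddCommGroup A]
    {F G : classSpan T ⊗[ℤ] M →+ A}
    (h : ∀ w (hw : w ∈ T) m, F (⟨ofWord w, ofWord_mem_classSpan hw⟩ ⊗ₜ m) =
      G (⟨ofWord w, ofWord_mem_classSpan hw⟩ ⊗ₜ m)) : F = G := by
  refine AddMonoidHom.toIntLinearMap_injective <|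
    TensorProduct.ext (LinearMap.ext_on Submodule.span_span_coe_preimage ?_)
  rintro ⟨_, _⟩ ⟨w, hw, rfl⟩
  exact LinearMap.ext (h w hw)

open Classical in
/-- The linear projection of the coinvariants onto the span of the classes of an invariant set of
words `T`, killing the classes of all other words. -/
noncomputable def classProj (hT : IsDihedralInvariant T) : DCoinv g n →ₗ[ℤ] classSpan T :=
  lift (fun w => if hw : w ∈ T then ⟨ofWord w, ofWord_mem_classSpan hw⟩ else 0)
    (fun w => by
      have hmem : rot w ∈ T ↔ w ∈ T := Set.ext_iff.1 hT.preimage_rot w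
      simp only [hmem, ofWord_rot])
    (fun w => by
      have hmem : rev w ∈ T ↔ w ∈ T := Set.ext_iff.1 hT.preimage_rev w
      simp only [hmem, smul_dite, smul_zero, SetLike.mk_smul_mk, ofWord_rev])

lemma classProj_ofWord (hT : IsDihedralInvariant T) {w : DWord g n} (hw : w ∈ T) :
    classProj hT (ofWord w) = ⟨ofWord w, ofWord_mem_classSpan hw⟩ := by
  rw [classProj, lift_ofWord, dif_pos hw]

end ClassSpan

section TensorLift

variable {M A : Type*} [AddCommGroup M] [AddCommGroup A]

/-- The universal property of the coinvariants tensored with `M`, in terms of functions on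
words. The map is only additive because the two `ℤ`-module instances on a tensor product, that of
a tensor product and that of an abelian group, are not reducibly equal. -/
noncomputable def tensorLift (f : DWord g n → M →+ A) (hrot : ∀ w, f (rot w) = f w)
    (hrev : ∀ w m, f (rev w) ((-1 : ℤ) ^ n • m) = f w m) : DCoinv g n ⊗[ℤ] M →+ A :=
  TensorProduct.liftAddHom
    (lift f hrot fun w => AddMonoidHom.ext fun m => by
      rw [AddMonoidHom.smul_apply, ← map_zsmul, hrev]).toAddMonoidHom
    fun z c m => by rw [map_zsmul, AddMonoidHom.smul_apply, map_zsmul]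

lemma tensorLift_tmul (f : DWord g n → M →+ A) (hrot : ∀ w, f (rot w) = f w)
    (hrev : ∀ w m, f (rev w) ((-1 : ℤ) ^ n • m) = f w m) (w : DWord g n) (m : M) :
    tensorLift f hrot hrev (ofWord w ⊗ₜ m) = f w m := by
  rw [tensorLift, TensorProduct.liftAddHom_tmul, LinearMap.toAddMonoidHom_coe, lift_ofWord]

end TensorLift

section Doubling

variable {M : Type*} [AddCommGroup M]

/-- The map `m ↦ [w] ⊗ m`. -/
noncomputable def ofWordTmul (M : Type*) [AddCommGroup M] (w : DWord g n) :
    M →+ DCoinv g n ⊗[ℤ] M :=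
  (TensorProduct.mk ℤ (DCoinv g n) M (ofWord w)).toAddMonoidHom

lemma ofWordTmul_apply (w : DWord g n) (m : M) : ofWordTmul M w m = ofWord w ⊗ₜ m := rfl

lemma ofWordTmul_rot (w : DWord g n) : ofWordTmul M (rot w) = ofWordTmul M w := by
  rw [ofWordTmul, ofWord_rot, ofWordTmul]

lemma ofWordTmul_rev (w : DWord g n) (m : M) :
    ofWordTmul M (rev w) ((-1 : ℤ) ^ n • m) = ofWordTmul M w m := by
  rw [ofWordTmul_apply, ofWordTmul_apply, ← TensorProduct.smul_tmul, ofWord_rev]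

/-- The map `[w] ⊗ m ↦ [ww] ⊗ m`. -/
noncomputable def doubling (g : ℕ) (hM : ∀ m : M, (-1 : ℤ) ^ n • m = m) :
    DCoinv g n ⊗[ℤ] M →+ DCoinv g (2 * n) ⊗[ℤ] M :=
  tensorLift (fun w => ofWordTmul M (dblWord g n w))
    (fun w => by rw [(semiconj_dblWord_rot g n).eq, ofWordTmul_rot])
    (fun w m => by
      rw [(semiconj_dblWord_rev g n).eq, hM, ofWordTmul_apply,
        ofWord_rev_of_even (even_two_mul n), ofWordTmul_apply])

lemma doubling_tmul (hM : ∀ m : M, (-1 : ℤ) ^ n • m = m) (w : DWord g n) (m : M) :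
    doubling g hM (ofWord w ⊗ₜ m) = ofWord (dblWord g n w) ⊗ₜ m :=
  tensorLift_tmul _ _ _ w m

/-- The map `[ww] ⊗ m ↦ [w] ⊗ m`, killing the classes of words that are not doubled. -/
noncomputable def halving (g : ℕ) (hM : ∀ m : M, (-1 : ℤ) ^ n • m = m) :
    DCoinv g (2 * n) ⊗[ℤ] M →+ DCoinv g n ⊗[ℤ] M :=
  tensorLift (Function.extend (dblWord g n) (ofWordTmul M) 0)
    (extend_zero_apply_of_semiconj (dblWord_injective g n) (semiconj_dblWord_rot g n)
      ofWordTmul_rot)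
    (fun u m => by
      rw [(even_two_mul n).neg_one_pow, one_smul]
      refine DFunLike.congr_fun (extend_zero_apply_of_semiconj (dblWord_injective g n)
        (semiconj_dblWord_rev g n) (fun w => AddMonoidHom.ext fun m => ?_) u) m
      rw [← ofWordTmul_rev w, hM])

lemma halving_dblWord_tmul (hM : ∀ m : M, (-1 : ℤ) ^ n • m = m) (w : DWord g n) (m : M) :
    halving g hM (ofWord (dblWord g n w) ⊗ₜ m) = ofWord w ⊗ₜ m := by
  rw [halving, tensorLift_tmul, (dblWord_injective g n).extend_apply, ofWordTmul_apply]

variable {T : Set (DWord g n)}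

/-- The map `[w] ⊗ m ↦ [ww] ⊗ m` on the span of the classes of the words in `T`. -/
noncomputable def spanDoubling (hM : ∀ m : M, (-1 : ℤ) ^ n • m = m)
    (hT : IsDihedralInvariant T) :
    classSpan T ⊗[ℤ] M →+ classSpan (dblWord g n '' T) ⊗[ℤ] M :=
  ((classProj hT.image_dblWord).rTensor M).toAddMonoidHom.comp <|
    (doubling g hM).comp ((classSpan T).subtype.rTensor M).toAddMonoidHom

lemma spanDoubling_tmul (hM : ∀ m : M, (-1 : ℤ) ^ n • m = m) (hT : IsDihedralInvariant T)
    {w : DWord g n} (hw : w ∈ T) (m : M) :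
    spanDoubling hM hT (⟨ofWord w, ofWord_mem_classSpan hw⟩ ⊗ₜ m) =
      ⟨ofWord (dblWord g n w), ofWord_mem_classSpan (Set.mem_image_of_mem _ hw)⟩ ⊗ₜ m := by
  change (classProj hT.image_dblWord).rTensor M (doubling g hM (ofWord w ⊗ₜ m)) = _
  rw [doubling_tmul, LinearMap.rTensor_tmul,
    classProj_ofWord hT.image_dblWord (Set.mem_image_of_mem _ hw)]

/-- The inverse of `spanDoubling`. -/
noncomputable def spanHalving (hM : ∀ m : M, (-1 : ℤ) ^ n • m = m)
    (hT : IsDihedralInvariant T) :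
    classSpan (dblWord g n '' T) ⊗[ℤ] M →+ classSpan T ⊗[ℤ] M :=
  ((classProj hT).rTensor M).toAddMonoidHom.comp <|
    (halving g hM).comp ((classSpan (dblWord g n '' T)).subtype.rTensor M).toAddMonoidHom

lemma spanHalving_tmul (hM : ∀ m : M, (-1 : ℤ) ^ n • m = m) (hT : IsDihedralInvariant T)
    {w : DWord g n} (hw : w ∈ T) (m : M) :
    spanHalving hM hT
        (⟨ofWord (dblWord g n w), ofWord_mem_classSpan (Set.mem_image_of_mem _ hw)⟩ ⊗ₜ m) =
      ⟨ofWord w, ofWord_mem_classSpan hw⟩ ⊗ₜ m := by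
  change (classProj hT).rTensor M (halving g hM (ofWord (dblWord g n w) ⊗ₜ m)) = _
  rw [halving_dblWord_tmul, LinearMap.rTensor_tmul, classProj_ofWord hT hw]

/-- Doubling as an isomorphism between spans of classes, with coefficients in a module `M` on
which the sign of the reversal acts trivially. -/
noncomputable def doublingEquiv (hM : ∀ m : M, (-1 : ℤ) ^ n • m = m)
    (hT : IsDihedralInvariant T) :
    classSpan T ⊗[ℤ] M ≃ₗ[ℤ] classSpan (dblWord g n '' T) ⊗[ℤ] M :=
  (AddMonoidHom.toAddEquiv (spanDoubling hM hT) (spanHalving hM hT)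
    (classSpan_tensor_ext fun w hw m =>
      (congrArg _ (spanDoubling_tmul hM hT hw m)).trans (spanHalving_tmul hM hT hw m))
    (classSpan_tensor_ext <| by
      rintro _ ⟨w, hw, rfl⟩ m
      exact (congrArg _ (spanHalving_tmul hM hT hw m)).trans
        (spanDoubling_tmul hM hT hw m))).toIntLinearEquiv

lemma doublingEquiv_tmul (hM : ∀ m : M, (-1 : ℤ) ^ n • m = m) (hT : IsDihedralInvariant T)
    {w : DWord g n} (hw : w ∈ T) (m : M) :
    doublingEquiv hM hT (⟨ofWord w, ofWord_mem_classSpan hw⟩ ⊗ₜ m) =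
      ⟨ofWord (dblWord g n w), ofWord_mem_classSpan (Set.mem_image_of_mem _ hw)⟩ ⊗ₜ m :=
  spanDoubling_tmul hM hT hw m

end Doubling

section Symmetric

lemma ofWord_shift (w : DWord g n) (c : ZMod n) : ofWord (fun i => w (i - c)) = ofWord w := by
  have hstep (c : ZMod n) : ofWord (fun i => w (i - (c + 1))) = ofWord (fun i => w (i - c)) := by
    rw [← ofWord_rot (fun i => w (i - c))]
    exact congrArg ofWord (funext fun i => congrArg w (by ring))
  obtain ⟨c, rfl⟩ := ZMod.intCast_surjective c
  induction c with
  | zero => simp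
  | succ c ih => rw [Int.cast_add, Int.cast_one, hstep, ih]
  | pred c ih => rw [← hstep, Int.cast_sub, Int.cast_one, sub_add_cancel, ih]

lemma ofWord_rev_of_isSymTensor {w : DWord g n} (hw : IsSymTensor g n w) :
    ofWord (rev w) = ofWord w := by
  obtain ⟨k, hk⟩ := hw
  rw [← ofWord_shift w (-(k + 1))]
  congr 1
  funext i
  convert hk (i + 1) using 1
  · rw [rev_apply]
    ring_nf
  · ring_nf

lemma two_nsmul_ssub_eq_zero (hn : Odd n) (s : Ssub g n) : 2 • s = 0 := by
  suffices hle : Ssub g n ≤ Submodule.torsionBy ℤ (DCoinv g n) 2 by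
    have hs := (Submodule.mem_torsionBy_iff _ _).1 (hle s.2)
    rw [two_smul] at hs
    rw [two_nsmul]
    exact Subtype.ext hs
  refine Submodule.span_le.2 ?_
  rintro _ ⟨w, hw, rfl⟩
  have hneg : -ofWord w = ofWord w := by
    simpa only [hn.neg_one_pow, neg_one_smul, ofWord_rev_of_isSymTensor hw] using ofWord_rev w
  rw [SetLike.mem_coe, Submodule.mem_torsionBy_iff, two_smul]
  exact neg_eq_iff_add_eq_zero.1 hneg

end Symmetric

section Equivalences

variable {T : Set (DWord g n)}

lemma exists_linearEquiv_classSpan_of_even (hn : Even n) (hT : IsDihedralInvariant T) :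
    ∃ e : classSpan T ≃ₗ[ℤ] classSpan (dblWord g n '' T), ∀ w (hw : w ∈ T),
      (e ⟨ofWord w, ofWord_mem_classSpan hw⟩ : DCoinv g (2 * n)) = ofWord (dblWord g n w) := by
  have hM (m : ℤ) : (-1 : ℤ) ^ n • m = m := by rw [hn.neg_one_pow, one_smul]
  let e := ((TensorProduct.rid ℤ (classSpan T)).symm.toAddEquiv.trans
    (doublingEquiv hM hT).toAddEquiv).trans
      (TensorProduct.rid ℤ (classSpan (dblWord g n '' T))).toAddEquiv
  have he (w) (hw : w ∈ T) : e ⟨ofWord w, ofWord_mem_classSpan hw⟩ =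
      ⟨ofWord (dblWord g n w), ofWord_mem_classSpan (Set.mem_image_of_mem _ hw)⟩ := by
    change TensorProduct.rid ℤ _ (doublingEquiv hM hT
      (⟨ofWord w, ofWord_mem_classSpan hw⟩ ⊗ₜ (1 : ℤ))) = _
    rw [doublingEquiv_tmul hM hT hw, TensorProduct.rid_tmul, one_smul]
  exact ⟨e.toIntLinearEquiv, fun w hw => congrArg Subtype.val (he w hw)⟩

lemma exists_linearEquiv_classSpan_tensor_zmod_two (hT : IsDihedralInvariant T) :
    ∃ e : classSpan T ⊗[ℤ] ZMod 2 ≃ₗ[ℤ] classSpan (dblWord g n '' T) ⊗[ℤ] ZMod 2,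
      ∀ w (hw : w ∈ T), (classSpan (dblWord g n '' T)).subtype.rTensor (ZMod 2)
        (e (⟨ofWord w, ofWord_mem_classSpan hw⟩ ⊗ₜ 1)) = ofWord (dblWord g n w) ⊗ₜ 1 := by
  have hM := neg_one_pow_smul_of_two_nsmul_eq_zero (fun m : ZMod 2 => CharTwo.two_nsmul m) n
  refine ⟨doublingEquiv hM hT, fun w hw => ?_⟩
  rw [doublingEquiv_tmul hM hT hw, LinearMap.rTensor_tmul, Submodule.subtype_apply]

lemma exists_linearEquiv_psub_of_even (hn : Even n) :
    ∃ e : DCoinv g n ≃ₗ[ℤ] Psub g n,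
      ∀ w, (e (ofWord w) : DCoinv g (2 * n)) = ofWord (dblWord g n w) := by
  obtain ⟨e, he⟩ := exists_linearEquiv_classSpan_of_even (g := g) hn .univ
  rw [psub_eq_classSpan]
  exact ⟨(LinearEquiv.ofTop _ (classSpan_univ g n)).symm.trans e, fun w => he w trivial⟩

lemma exists_linearEquiv_psSub_of_even (hn : Even n) :
    ∃ e : Ssub g n ≃ₗ[ℤ] PsSub g n, ∀ w (hw : IsSymTensor g n w),
      (e ⟨ofWord w, ofWord_mem_classSpan hw⟩ : DCoinv g (2 * n)) = ofWord (dblWord g n w) := by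
  rw [psSub_eq_classSpan]
  exact exists_linearEquiv_classSpan_of_even hn .setOf_isSymTensor

lemma exists_linearEquiv_psub_tensor_zmod_two (g n : ℕ) :
    ∃ e : DCoinv g n ⊗[ℤ] ZMod 2 ≃ₗ[ℤ] Psub g n ⊗[ℤ] ZMod 2,
      ∀ w, (Psub g n).subtype.rTensor (ZMod 2) (e (ofWord w ⊗ₜ 1)) =
        ofWord (dblWord g n w) ⊗ₜ 1 := by
  obtain ⟨e, he⟩ := exists_linearEquiv_classSpan_tensor_zmod_two (g := g) (n := n) .univ
  let ofTop := (LinearEquiv.ofTop _ (classSpan_univ g n)).symm.rTensor (ZMod 2)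
  rw [psub_eq_classSpan]
  exact ⟨(ofTop.toAddEquiv.trans e.toAddEquiv).toIntLinearEquiv, fun w => he w trivial⟩

lemma exists_linearEquiv_psSub_tensor_zmod_two_of_odd (hn : Odd n) :
    ∃ e : Ssub g n ≃ₗ[ℤ] PsSub g n ⊗[ℤ] ZMod 2, ∀ w (hw : IsSymTensor g n w),
      (PsSub g n).subtype.rTensor (ZMod 2) (e ⟨ofWord w, ofWord_mem_classSpan hw⟩) =
        ofWord (dblWord g n w) ⊗ₜ 1 := by
  obtain ⟨tmulOne, htmulOne⟩ := exists_linearEquiv_tensor_zmod (two_nsmul_ssub_eq_zero (g := g) hn)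
  obtain ⟨e, he⟩ :=
    exists_linearEquiv_classSpan_tensor_zmod_two (g := g) (n := n) .setOf_isSymTensor
  rw [psSub_eq_classSpan]
  exact ⟨tmulOne.trans e, fun w hw =>
    (congrArg (fun t => LinearMap.rTensor _ _ (e t)) (htmulOne _)).trans (he w hw)⟩

end Equivalences

end DCoinv

/-- For every `n ≥ 2` and `g ≥ 1` there are isomorphisms of abelian groups
`(H^{⊗n})_{D_{2n}} ⊗ M ≅ P_{2n} ⊗ M` and `S_n ≅ P^s_{2n} ⊗ M`, where `M = ℤ` if `n`
is even and `M = ℤ/2ℤ` if `n` is odd, both induced by the doubling assignment on basis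
tensors `b_1⊗⋯⊗b_n ↦ b_1⊗⋯⊗b_n⊗b_1⊗⋯⊗b_n`.  (For `M = ℤ` the trivial tensor factor
is omitted; compatibility with doubling is expressed via the inclusions of `P_{2n}`
and `P^s_{2n}` into `(H^{⊗2n})_{D_{4n}}`.) -/
theorem stmt_9 (g n : ℕ) (hg : 1 ≤ g) (hn : 2 ≤ n) :
    (Even n →
      (∃ e : DCoinv g n ≃ₗ[ℤ] Psub g n,
        ∀ w : DWord g n,
          (e (Submodule.Quotient.mk (Finsupp.single w 1)) : DCoinv g (2 * n)) =
            Submodule.Quotient.mk (Finsupp.single (dblWord g n w) 1)) ∧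
      (∃ e : Ssub g n ≃ₗ[ℤ] PsSub g n,
        ∀ (w : DWord g n) (h : IsSymTensor g n w),
          (e ⟨Submodule.Quotient.mk (Finsupp.single w 1),
              Submodule.subset_span ⟨w, h, rfl⟩⟩ : DCoinv g (2 * n)) =
            Submodule.Quotient.mk (Finsupp.single (dblWord g n w) 1))) ∧
    (Odd n →
      (∃ e : (DCoinv g n ⊗[ℤ] ZMod 2) ≃ₗ[ℤ] ((Psub g n) ⊗[ℤ] ZMod 2),
        ∀ w : DWord g n,
          LinearMap.rTensor (ZMod 2) (Psub g n).subtype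
              (e ((Submodule.Quotient.mk (Finsupp.single w 1) : DCoinv g n) ⊗ₜ[ℤ]
                (1 : ZMod 2))) =
            (Submodule.Quotient.mk (Finsupp.single (dblWord g n w) 1) :
              DCoinv g (2 * n)) ⊗ₜ[ℤ] (1 : ZMod 2)) ∧
      (∃ e : Ssub g n ≃ₗ[ℤ] ((PsSub g n) ⊗[ℤ] ZMod 2),
        ∀ (w : DWord g n) (h : IsSymTensor g n w),
          LinearMap.rTensor (ZMod 2) (PsSub g n).subtype
              (e ⟨Submodule.Quotient.mk (Finsupp.single w 1),
                Submodule.subset_span ⟨w, h, rfl⟩⟩) =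
            (Submodule.Quotient.mk (Finsupp.single (dblWord g n w) 1) :
              DCoinv g (2 * n)) ⊗ₜ[ℤ] (1 : ZMod 2))) := by
  refine ⟨fun heven => ⟨?_, ?_⟩, fun hodd => ⟨?_, ?_⟩⟩
  · exact DCoinv.exists_linearEquiv_psub_of_even heven
  · exact DCoinv.exists_linearEquiv_psSub_of_even heven
  · exact DCoinv.exists_linearEquiv_psub_tensor_zmod_two g n
  · exact DCoinv.exists_linearEquiv_psSub_tensor_zmod_two_of_odd hodd
end
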